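/- Let ε > 0, let p be a probability distribution on Fin N, and let B ⊆ Fin N satisfy ∑_{i ∈ B} p i ≤ 1 − ε/4. Let i_1, …, i_M be M independent samples from p and let A ⊆ Fin N be the set of elements appearing at least once among the samples. Then Prob[ |A ∩ B| ≥ (1 − ε/8)·M ] ≤ exp(−M·ε²/32). -/

import Mathlib

open scoped Classical

/-!
Each element of `A ∩ B` is hit by some sample lying in `B`, so `|A ∩ B|` is at most the number of
samples lying in `B`. That number is a sum of `M` independent Bernoulli variables of mean at most
`1 - ε / 4`, and Hoeffding's inequality bounds the probability that it exceeds its mean by at least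
`(ε / 8) * M`.
-/

open MeasureTheory ProbabilityTheory Real

section ProductMeasure

variable {ι α : Type*} [Fintype ι] [MeasurableSpace α] {μ : Measure α}

theorem measureReal_pi_coe_finset {X : ι → Type*} [∀ a, MeasurableSpace (X a)]
    [∀ a, MeasurableSingletonClass (X a)] (ν : ∀ a, Measure (X a)) [∀ a, SigmaFinite (ν a)]
    (S : Finset (∀ a, X a)) :
    (Measure.pi ν).real S = ∑ s ∈ S, ∏ a, (ν a).real {s a} := by
  rw [← sum_measureReal_singleton]
  simp only [measureReal_def, Measure.pi_singleton, ENNReal.toReal_prod]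

variable [IsProbabilityMeasure μ] {δ : ℝ}

theorem measureReal_pi_sum_ge_le_of_mem_Icc {f : α → ℝ} {a b : ℝ} (hf : AEMeasurable f μ)
    (hmem : ∀ᵐ x ∂μ, f x ∈ Set.Icc a b) (hδ : 0 ≤ δ) :
    (Measure.pi fun _ : ι => μ).real {s | (μ[f] + δ) * Fintype.card ι ≤ ∑ i, f (s i)} ≤
      exp (-(2 * Fintype.card ι * δ ^ 2) / (b - a) ^ 2) := by
  have indep : iIndepFun (fun i (s : ι → α) => f (s i) - μ[f]) (Measure.pi fun _ => μ) :=
    iIndepFun_pi fun _ => hf.sub_const _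
  have subgaussian (i : ι) : HasSubgaussianMGF (fun s : ι → α => f (s i) - μ[f])
      ((‖b - a‖₊ / 2) ^ 2) (Measure.pi fun _ => μ) := by
    have eval := measurePreserving_eval (fun _ : ι => μ) i
    refine .of_map (X := fun x => f x - μ[f]) eval.aemeasurable ?_
    rw [eval.map_eq]
    exact hasSubgaussianMGF_of_mem_Icc hf hmem
  have hoeffding := HasSubgaussianMGF.measure_sum_ge_le_of_iIndepFun indep (s := Finset.univ)
    (fun i _ => subgaussian i) (mul_nonneg hδ (Nat.cast_nonneg (Fintype.card ι)))
  convert hoeffding using 2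
  · ext s
    simp only [Set.mem_ofPred_eq, Finset.sum_sub_distrib, Finset.sum_const, Finset.card_univ,
      nsmul_eq_mul, le_sub_iff_add_le]
    ring_nf
  · simp only [Finset.sum_const, Finset.card_univ, nsmul_eq_mul, NNReal.coe_mul, NNReal.coe_natCast,
      NNReal.coe_pow, NNReal.coe_div, coe_nnnorm, NNReal.coe_ofNat, div_pow, norm_eq_abs, sq_abs]
    rcases eq_or_ne (Fintype.card ι : ℝ) 0 with hι | hι
    · simp [hι]
    rcases eq_or_ne (b - a) 0 with hab | hab
    · -- Division by zero makes the bound `1` here.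
      simp [hab]
    field_simp

theorem measureReal_pi_card_filter_mem_ge_le {B : Set α} [DecidablePred (· ∈ B)]
    (hB : MeasurableSet B) (hδ : 0 ≤ δ) :
    (Measure.pi fun _ : ι => μ).real
        {s | (μ.real B + δ) * Fintype.card ι ≤ (Finset.univ.filter fun i => s i ∈ B).card} ≤
      exp (-(2 * Fintype.card ι * δ ^ 2)) := by
  have mem_Icc (x : α) : B.indicator (1 : α → ℝ) x ∈ Set.Icc (0 : ℝ) 1 :=
    ⟨Set.indicator_nonneg (fun _ _ => zero_le_one) x,
      Set.indicator_le_self' (fun _ _ => zero_le_one) x⟩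
  have hoeffding := measureReal_pi_sum_ge_le_of_mem_Icc (ι := ι) (μ := μ)
    (measurable_one.indicator hB).aemeasurable (ae_of_all _ mem_Icc) hδ
  rw [integral_indicator_one hB] at hoeffding
  simpa [Set.indicator_apply] using hoeffding

end ProductMeasure

section FiniteSampling

variable {ι α : Type*} [Fintype ι]

theorem exists_isProbabilityMeasure_real_singleton_eq [Fintype α] [MeasurableSpace α]
    [MeasurableSingletonClass α] {p : α → ℝ} (hp : ∀ i, 0 ≤ p i) (hsum : ∑ i, p i = 1) :
    ∃ μ : Measure α, IsProbabilityMeasure μ ∧ ∀ i, μ.real {i} = p i := by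
  have hsum' : ∑ i, ENNReal.ofReal (p i) = 1 := by
    rw [← ENNReal.ofReal_sum_of_nonneg fun i _ => hp i, hsum, ENNReal.ofReal_one]
  refine ⟨(PMF.ofFintype _ hsum').toMeasure, inferInstance, fun i => ?_⟩
  rw [measureReal_def, PMF.toMeasure_apply_singleton _ _ (measurableSet_singleton i),
    PMF.ofFintype_apply, ENNReal.toReal_ofReal (hp i)]

theorem card_image_inter_le_card_filter_mem [DecidableEq α] (s : ι → α) (B : Finset α) :
    (Finset.univ.image s ∩ B).card ≤ (Finset.univ.filter fun i => s i ∈ B).card := by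
  rw [← Finset.filter_mem_eq_inter, Finset.filter_image]
  exact Finset.card_image_le

theorem intersection_with_B_bound_general [Fintype α] [DecidableEq α] {p : α → ℝ}
    (hp : ∀ i, 0 ≤ p i) (hsum : ∑ i, p i = 1) {B : Finset α} {q δ : ℝ}
    (hB : ∑ i ∈ B, p i ≤ q) (hδ : 0 ≤ δ) :
    (∑ s ∈ Finset.univ.filter (fun s : ι → α =>
        (q + δ) * (Fintype.card ι : ℝ) ≤ ((Finset.image s Finset.univ ∩ B).card : ℝ)),
      ∏ a, p (s a)) ≤ exp (-(2 * Fintype.card ι * δ ^ 2)) := by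
  let _ : MeasurableSpace α := ⊤
  obtain ⟨μ, _, hμ⟩ := exists_isProbabilityMeasure_real_singleton_eq hp hsum
  have hμB : μ.real B ≤ q := by simpa only [← sum_measureReal_singleton, hμ] using hB
  simp only [← hμ, ← measureReal_pi_coe_finset fun _ : ι => μ]
  refine (measureReal_mono fun s hs => ?_).trans
    (measureReal_pi_card_filter_mem_ge_le B.measurableSet hδ)
  simp only [Set.mem_ofPred_eq, Finset.mem_coe]
  calc (μ.real B + δ) * Fintype.card ι
      ≤ (q + δ) * Fintype.card ι := by gcongr
    _ ≤ (Finset.univ.image s ∩ B).card := (Finset.mem_filter.1 hs).2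
    _ ≤ (Finset.univ.filter fun i => s i ∈ B).card := by
      exact_mod_cast card_image_inter_le_card_filter_mem s B

end FiniteSampling

/-- Chernoff-type bound: if `B` has `p`-probability at most `1 − ε/4`, then the
set `A` of elements appearing among `M` independent samples from `p` satisfies
`|A ∩ B| ≥ (1 − ε/8)·M` with probability at most `exp(−Mε²/32)`. -/
theorem intersection_with_B_bound
    (N M : ℕ) (ε : ℝ) (hε : 0 < ε)
    (p : Fin N → ℝ) (hp : ∀ i, 0 ≤ p i) (hsum : ∑ i, p i = 1)
    (B : Finset (Fin N)) (hB : ∑ i ∈ B, p i ≤ 1 - ε / 4) :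
    (∑ s ∈ Finset.univ.filter (fun s : Fin M → Fin N =>
        (1 - ε / 8) * (M : ℝ) ≤ ((Finset.image s Finset.univ ∩ B).card : ℝ)),
      ∏ a, p (s a)) ≤ Real.exp (-(M : ℝ) * ε ^ 2 / 32) := by
  have bound := intersection_with_B_bound_general (ι := Fin M) hp hsum hB
    (by positivity : 0 ≤ ε / 8)
  rw [Fintype.card_fin] at bound
  convert bound using 5 <;> ring
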